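/- Let ‖·‖ be a norm on ℝ^d with unit ball U and let (u^i_1)_{i=1}^m, ..., (u^i_n)_{i=1}^m be n sequences in U whose union is zero-sum. Then there exist permutations π_1,...,π_n of {1,...,m} such that for every k ∈ {1,...,m}, ‖∑_{i=1}^k ∑_{j=1}^n u^{π_j(i)}_j‖ ≤ min{n·d, 40·d^5}. -/

import Mathlib

open Finset in
/-- Moving from a point of the unit cube in a nonzero direction supported on its fractional
coordinates, one reaches a point of the cube with strictly fewer fractional coordinates. -/
lemma exists_add_smul_fractional_ssubset {ι : Type*} [Fintype ι] (w z : ι → ℝ)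
    (hw0 : ∀ p, 0 ≤ w p) (hw1 : ∀ p, w p ≤ 1) (hz : z ≠ 0)
    (hzF : ∀ p, ¬ (0 < w p ∧ w p < 1) → z p = 0) :
    ∃ t : ℝ, (∀ p, 0 ≤ w p + t * z p) ∧ (∀ p, w p + t * z p ≤ 1) ∧
      #{p | 0 < w p + t * z p ∧ w p + t * z p < 1} < #{p | 0 < w p ∧ w p < 1} := by
  obtain ⟨q, hq⟩ := Function.ne_iff.mp hz
  obtain ⟨p, hp, hmin⟩ := exists_min_image {p | z p ≠ 0}
    (fun p => if 0 < z p then (1 - w p) / z p else w p / (-z p)) ⟨q, by simpa using hq⟩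
  set f : ι → ℝ := fun p => if 0 < z p then (1 - w p) / z p else w p / (-z p) with hf
  have hzp : z p ≠ 0 := by simpa using hp
  have hpos : 0 ≤ f p := by
    simp only [hf]
    split_ifs with h
    · exact div_nonneg (by linarith [hw1 p]) h.le
    · exact div_nonneg (hw0 p) (by linarith)
  have key : ∀ r, 0 ≤ w r + f p * z r ∧ w r + f p * z r ≤ 1 := by
    intro r
    by_cases hr : z r = 0
    · simp [hr, hw0 r, hw1 r]
    have hle : f p ≤ f r := hmin r (by simpa using hr)
    rcases lt_or_gt_of_ne hr with h | h
    · have h' : f r = w r / (-z r) := by simp [hf, not_lt.mpr h.le]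
      rw [h', le_div_iff₀ (by linarith)] at hle
      constructor
      · linarith
      · nlinarith [hw1 r]
    · have h' : f r = (1 - w r) / z r := by simp [hf, h]
      rw [h', le_div_iff₀ h] at hle
      constructor
      · have := hw0 r
        positivity
      · linarith
  refine ⟨f p, fun r => (key r).1, fun r => (key r).2, card_lt_card ?_⟩
  rw [ssubset_iff_of_subset]
  · refine ⟨p, by simpa using not_imp_comm.mp (hzF p) hzp, ?_⟩
    simp only [mem_filter, mem_univ, true_and, not_and, not_lt]
    rcases lt_or_gt_of_ne hzp with h | h
    · have h' : f p = w p / (-z p) := by simp [hf, not_lt.mpr h.le]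
      have : w p + f p * z p = 0 := by rw [h']; field_simp; ring
      intro h0
      linarith
    · have h' : f p = (1 - w p) / z p := by simp [hf, h]
      have : w p + f p * z p = 1 := by rw [h']; field_simp; ring
      intro _
      linarith
  · intro r hr
    simp only [mem_filter, mem_univ, true_and] at hr ⊢
    by_contra hr'
    rw [hzF r hr', mul_zero, add_zero] at hr
    exact hr' hr

/-- A weight in the unit cube whose sum in every color is `k` and whose weighted vector sum
vanishes. -/
structure IsBalancedWeight {I J E : Type*} [Fintype I] [Fintype J] [AddCommGroup E] [Module ℝ E]
    (a : I × J → E) (k : ℕ) (w : I × J → ℝ) : Prop where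
  nonneg : ∀ p, 0 ≤ w p
  le_one : ∀ p, w p ≤ 1
  color_sum : ∀ j, ∑ i, w (i, j) = k
  vector_sum : ∑ p, w p • a p = 0

section

open Finset

variable {I J E : Type*} [Fintype I] [Fintype J] [AddCommGroup E] [Module ℝ E]
  {a : I × J → E} {k : ℕ} {w : I × J → ℝ}

/-- If the fractional entries outnumber the colors containing them by more than the dimension,
there is a nonzero direction supported on them which preserves all linear constraints. -/
lemma exists_ne_zero_balanced_direction [FiniteDimensional ℝ E] (a : I × J → E)
    (F : Finset (I × J)) [DecidableEq J] (hF : #(F.image Prod.snd) + Module.finrank ℝ E < #F) :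
    ∃ z : I × J → ℝ, z ≠ 0 ∧ (∀ p ∉ F, z p = 0) ∧ (∀ j, ∑ i, z (i, j) = 0) ∧
      ∑ p, z p • a p = 0 := by
  classical
  let L : (I × J → ℝ) →ₗ[ℝ] ((F.image Prod.snd → ℝ) × E) × ((Fᶜ : Finset (I × J)) → ℝ) :=
    ((LinearMap.pi fun j : F.image Prod.snd => ∑ i, LinearMap.proj (i, (j : J))).prod
      (∑ p, (LinearMap.proj p : (I × J → ℝ) →ₗ[ℝ] ℝ).smulRight (a p))).prod
      (LinearMap.pi fun p : (Fᶜ : Finset (I × J)) => LinearMap.proj (p : I × J))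
  have hrank : Module.finrank ℝ (((F.image Prod.snd → ℝ) × E) × ((Fᶜ : Finset (I × J)) → ℝ)) <
      Module.finrank ℝ (I × J → ℝ) := by
    rw [Module.finrank_prod, Module.finrank_prod, Module.finrank_fintype_fun_eq_card,
      Module.finrank_fintype_fun_eq_card, Module.finrank_fintype_fun_eq_card,
      Fintype.card_coe, Fintype.card_coe]
    have := card_add_card_compl F
    omega
  obtain ⟨z, hzL, hz⟩ :=
    (Submodule.ne_bot_iff _).mp (LinearMap.ker_ne_bot_of_finrank_lt (f := L) hrank)
  have hL : L z = 0 := hzL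
  have hout : ∀ p ∉ F, z p = 0 := fun p hp =>
    congrFun (congrArg Prod.snd hL) ⟨p, by simpa using hp⟩
  refine ⟨z, hz, hout, fun j => ?_, ?_⟩
  · by_cases hj : j ∈ F.image Prod.snd
    · simpa [L] using congrFun (congrArg (fun x => x.1.1) hL) ⟨j, hj⟩
    · refine sum_eq_zero fun i _ => hout _ fun h => hj (mem_image_of_mem Prod.snd h)
  · simpa [L] using congrArg (fun x => x.1.2) hL

/-- The support of a balanced weight with few fractional entries has almost minimal size. -/
lemma IsBalancedWeight.card_support_add_le [DecidableEq J] (hw : IsBalancedWeight a k w) :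
    #{p | w p ≠ 0} + #(({p | 0 < w p ∧ w p < 1} : Finset (I × J)).image Prod.snd) ≤
      Fintype.card J * k + #{p | 0 < w p ∧ w p < 1} := by
  classical
  set F : Finset (I × J) := {p | 0 < w p ∧ w p < 1} with hF
  set T := F.image Prod.snd with hT
  have hones : #{p | w p = 1} + #T ≤ Fintype.card J * k := by
    have h1 : #{p | w p = 1} = ∑ j, #{i | w (i, j) = 1} := by
      simp only [card_filter, Fintype.sum_prod_type_right]
    have h2 : #T = ∑ j, if j ∈ T then 1 else 0 := by simp
    rw [h1, h2, ← sum_add_distrib, ← card_univ, ← smul_eq_mul, ← sum_const]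
    refine sum_le_sum fun j _ => ?_
    have hcast : ((#{i | w (i, j) = 1} : ℕ) : ℝ) = ∑ i, if w (i, j) = 1 then (1 : ℝ) else 0 := by
      simp
    have hpt : ∀ i, (if w (i, j) = 1 then (1 : ℝ) else 0) ≤ w (i, j) := fun i => by
      split_ifs with h
      · exact h.ge
      · exact hw.nonneg _
    split_ifs with hj
    · obtain ⟨⟨i, j'⟩, hp, rfl⟩ := mem_image.mp hj
      have hp' : 0 < w (i, j') ∧ w (i, j') < 1 := by simpa [hF] using hp
      have : ((#{i | w (i, j') = 1} : ℕ) : ℝ) < k := by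
        rw [hcast, ← hw.color_sum j']
        refine sum_lt_sum (fun i _ => hpt i) ⟨i, mem_univ _, ?_⟩
        rw [if_neg hp'.2.ne]
        exact hp'.1
      exact_mod_cast this
    · have : ((#{i | w (i, j) = 1} : ℕ) : ℝ) ≤ k := by
        rw [hcast, ← hw.color_sum j]
        exact sum_le_sum fun i _ => hpt i
      exact_mod_cast this
  have hsupp : #{p | w p ≠ 0} ≤ #F + #{p | w p = 1} := by
    refine (card_le_card fun p hp => ?_).trans (card_union_le _ _)
    simp only [hF, mem_union, mem_filter, mem_univ, true_and] at hp ⊢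
    rcases (hw.le_one p).lt_or_eq with h | h
    · exact Or.inl ⟨lt_of_le_of_ne (hw.nonneg p) hp.symm, h⟩
    · exact Or.inr h
  omega

/-- Every balanced weight can be replaced by one with smaller support whose total support size
exceeds the sum of the weights by at most the dimension. -/
lemma IsBalancedWeight.exists_small_support [FiniteDimensional ℝ E]
    (hw : IsBalancedWeight a k w) :
    ∃ v, IsBalancedWeight a k v ∧ (∀ p, w p = 0 → v p = 0) ∧
      #{p | v p ≠ 0} ≤ Fintype.card J * k + Module.finrank ℝ E := by
  classical
  induction h : #{p | 0 < w p ∧ w p < 1} using Nat.strong_induction_on generalizing w with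
  | _ c ih =>
    by_cases hF : #(({p | 0 < w p ∧ w p < 1} : Finset (I × J)).image Prod.snd) +
        Module.finrank ℝ E < #{p | 0 < w p ∧ w p < 1}
    · obtain ⟨z, hz, hzF, hzc, hza⟩ := exists_ne_zero_balanced_direction a _ hF
      have hzF' : ∀ p, ¬ (0 < w p ∧ w p < 1) → z p = 0 := fun p hp => hzF p (by simpa using hp)
      obtain ⟨t, h0, h1, hlt⟩ :=
        exists_add_smul_fractional_ssubset w z hw.nonneg hw.le_one hz hzF'
      have hbal : IsBalancedWeight a k (fun p => w p + t * z p) :=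
        { nonneg := h0
          le_one := h1
          color_sum := fun j => by
            rw [sum_add_distrib, ← mul_sum, hzc, hw.color_sum, mul_zero, add_zero]
          vector_sum := by
            simp only [add_smul, mul_smul]
            rw [sum_add_distrib, ← smul_sum, hza, hw.vector_sum, smul_zero, add_zero] }
      obtain ⟨v, hv, hvs, hvc⟩ := ih _ (h ▸ hlt) hbal rfl
      refine ⟨v, hv, fun p hp => hvs p ?_, hvc⟩
      simp [hp, hzF' p (by simp [hp])]
    · refine ⟨w, hw, fun _ => id, ?_⟩
      have := hw.card_support_add_le
      omega

/-- Scaling a balanced weight lowers its color sums. -/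
lemma IsBalancedWeight.scale (hw : IsBalancedWeight a (k + 1) w) :
    IsBalancedWeight a k (fun p => (k / (k + 1) : ℝ) * w p) where
  nonneg p := mul_nonneg (by positivity) (hw.nonneg p)
  le_one p := mul_le_one₀ ((div_le_one (by positivity)).mpr (by linarith)) (hw.nonneg p)
    (hw.le_one p)
  color_sum j := by
    rw [← mul_sum, hw.color_sum]
    push_cast
    field_simp
  vector_sum := by
    simp only [mul_smul]
    rw [← smul_sum, hw.vector_sum, smul_zero]

/-- A balanced weight extends to a chain of balanced weights with nested small supports. -/
lemma IsBalancedWeight.exists_chain [FiniteDimensional ℝ E] (hw : IsBalancedWeight a k w)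
    (hcard : #{p | w p ≠ 0} ≤ Fintype.card J * k + Module.finrank ℝ E) :
    ∃ v : ℕ → I × J → ℝ, v k = w ∧
      (∀ l ≤ k, IsBalancedWeight a l (v l) ∧
        #{p | v l p ≠ 0} ≤ Fintype.card J * l + Module.finrank ℝ E) ∧
      ∀ l < k, ∀ p, v (l + 1) p = 0 → v l p = 0 := by
  induction k generalizing w with
  | zero =>
    refine ⟨fun _ => w, rfl, fun l hl => ?_, fun l hl => absurd hl (Nat.not_lt_zero l)⟩
    obtain rfl := Nat.le_zero.mp hl
    exact ⟨hw, hcard⟩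
  | succ k ih =>
    obtain ⟨w', hw', hsub, hcard'⟩ := hw.scale.exists_small_support
    obtain ⟨v, hvk, hv, hmono⟩ := ih hw' hcard'
    refine ⟨Function.update v (k + 1) w, by simp, fun l hl => ?_, fun l hl p hp => ?_⟩
    · rcases hl.lt_or_eq with h | rfl
      · rw [Function.update_of_ne h.ne]
        exact hv l (by omega)
      · rw [Function.update_self]
        exact ⟨hw, hcard⟩
    · rw [Function.update_of_ne hl.ne]
      rcases (Nat.lt_succ_iff.mp hl).lt_or_eq with h | rfl
      · rw [Function.update_of_ne (by omega)] at hp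
        exact hmono l h p hp
      · rw [Function.update_self] at hp
        rw [hvk]
        exact hsub p (by simp [hp])

/-- In each color the support of a balanced weight has at least `k` elements. -/
lemma IsBalancedWeight.le_card_color (hw : IsBalancedWeight a k w) (j : J) :
    k ≤ #{i | w (i, j) ≠ 0} := by
  have : (k : ℝ) ≤ (#{i | w (i, j) ≠ 0} : ℕ) := by
    rw [← hw.color_sum j, card_filter, Nat.cast_sum]
    refine sum_le_sum fun i _ => ?_
    split_ifs with h
    · simpa using hw.le_one _
    · simp [not_not.mp h]
  exact_mod_cast this

/-- In each color the support exceeds `k` by no more than the total support does. -/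
lemma IsBalancedWeight.card_color_le {e : ℕ} (hw : IsBalancedWeight a k w)
    (hcard : #{p | w p ≠ 0} ≤ Fintype.card J * k + e) (j : J) :
    #{i | w (i, j) ≠ 0} ≤ k + e := by
  classical
  have h1 : #{p | w p ≠ 0} = ∑ j, #{i | w (i, j) ≠ 0} := by
    simp only [card_filter, Fintype.sum_prod_type_right]
  have h2 : #(univ.erase j) * k ≤ ∑ j ∈ univ.erase j, #{i | w (i, j) ≠ 0} := by
    rw [← smul_eq_mul]
    exact card_nsmul_le_sum _ _ _ fun j _ => hw.le_card_color j
  rw [h1, ← add_sum_erase _ _ (mem_univ j), ← card_univ,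
    ← card_erase_add_one (mem_univ j), add_mul, one_mul] at hcard
  omega

/-- The nested supports of a chain of balanced weights can be listed color by color so that the
first `k` entries lie in the support at level `k` and contain the support at level `k - e`. -/
lemma exists_perm_of_chain {m e : ℕ} {J : Type*} [Fintype J] {a : Fin m × J → E}
    {v : ℕ → Fin m × J → ℝ} (hvm : ∀ p, v m p ≠ 0)
    (hv : ∀ l ≤ m, IsBalancedWeight a l (v l) ∧ #{p | v l p ≠ 0} ≤ Fintype.card J * l + e)
    (hmono : ∀ l < m, ∀ p, v (l + 1) p = 0 → v l p = 0) :
    ∃ π : J → Equiv.Perm (Fin m), ∀ l ≤ m, ∀ (i : Fin m) (j : J),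
      ((i : ℕ) < l → v l (π j i, j) ≠ 0) ∧ (v l (π j i, j) ≠ 0 → (i : ℕ) < l + e) := by
  classical
  have hex : ∀ p, ∃ l, v l p ≠ 0 := fun p => ⟨m, hvm p⟩
  let r : Fin m × J → ℕ := fun p => Nat.find (hex p)
  have hr : ∀ l ≤ m, ∀ p, v l p ≠ 0 ↔ r p ≤ l := by
    intro l hl p
    refine ⟨fun h => Nat.find_min' _ h, fun h => ?_⟩
    induction l, h using Nat.le_induction with
    | base => exact Nat.find_spec (hex p)
    | succ l _ ih => exact fun h0 => ih (by omega) (hmono l (by omega) p h0)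
  let π : J → Equiv.Perm (Fin m) := fun j => Tuple.sort fun i => r (i, j)
  have hπ : ∀ j, Monotone fun i => r (π j i, j) := fun j => Tuple.monotone_sort fun i => r (i, j)
  refine ⟨π, fun l hl i j => ?_⟩
  have hcard : #{i | v l (π j i, j) ≠ 0} = #{i | v l (i, j) ≠ 0} :=
    card_equiv (π j) fun i => by simp
  obtain ⟨hbal, hle⟩ := hv l hl
  constructor
  · intro hi h0
    have hsub : ({i | v l (π j i, j) ≠ 0} : Finset (Fin m)) ⊆ Iio i := fun i' hi' => by
      rw [mem_Iio]
      by_contra hii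
      rw [mem_filter, hr l hl] at hi'
      exact (hr l hl _).mpr ((hπ j (not_lt.mp hii)).trans hi'.2) h0
    have := card_le_card hsub
    have := hbal.le_card_color j
    rw [Fin.card_Iio] at *
    omega
  · intro h0
    have hsub : Iic i ⊆ ({i | v l (π j i, j) ≠ 0} : Finset (Fin m)) := fun i' hi' => by
      rw [mem_filter, hr l hl]
      exact ⟨mem_univ _, (hπ j (mem_Iic.mp hi')).trans ((hr l hl _).mp h0)⟩
    have := card_le_card hsub
    have := hbal.card_color_le hle j
    rw [Fin.card_Iic] at *
    omega

/-- A linear combination of vectors from the unit ball is bounded by its total coefficient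
mass. -/
lemma Seminorm.sum_smul_le {ι : Type*} (q : Seminorm ℝ E) (s : Finset ι) (c : ι → ℝ) (x : ι → E)
    (hx : ∀ p, q (x p) ≤ 1) : q (∑ p ∈ s, c p • x p) ≤ ∑ p ∈ s, |c p| := by
  refine (le_sum_of_subadditive q (map_zero q).le (map_add_le_add q) _ _).trans (sum_le_sum fun p _ => ?_)
  rw [map_smul_eq_mul, Real.norm_eq_abs]
  exact mul_le_of_le_one_right (abs_nonneg _) (hx p)

end

theorem stmt4 (d m n : ℕ) (N : (Fin d → ℝ) → ℝ)
    (hN_add : ∀ x y, N (x + y) ≤ N x + N y)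
    (hN_smul : ∀ (c : ℝ) x, N (c • x) = |c| * N x)
    (u : Fin m → Fin n → Fin d → ℝ)
    (hu_norm : ∀ i j, N (u i j) ≤ 1)
    (hzero : ∑ i, ∑ j, u i j = 0) :
    ∃ π : Fin n → Equiv.Perm (Fin m), ∀ k : ℕ, 1 ≤ k → k ≤ m →
      N (∑ i ∈ Finset.univ.filter (fun i : Fin m => (i:ℕ) < k),
          ∑ j, u (π j i) j) ≤ min ((n:ℝ) * d) (40 * (d:ℝ)^5) := by
  classical
  let q : Seminorm ℝ (Fin d → ℝ) := Seminorm.of N hN_add hN_smul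
  let a : Fin m × Fin n → Fin d → ℝ := fun p => u p.1 p.2
  have hbal : IsBalancedWeight a m (fun _ => 1) :=
    { nonneg := fun _ => zero_le_one
      le_one := fun _ => le_rfl
      color_sum := fun j => by simp
      vector_sum := by simpa [a, Fintype.sum_prod_type] using hzero }
  obtain ⟨v, hvm, hv, hmono⟩ := hbal.exists_chain (by simp [mul_comm])
  obtain ⟨π, hπ⟩ := exists_perm_of_chain (fun p => by simp [hvm]) hv hmono
  rw [Module.finrank_fin_fun] at *
  refine ⟨π, fun k _ hkm => ?_⟩
  let σ : Fin m × Fin n → Fin m × Fin n := fun p => (π p.2 p.1, p.2)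
  let χ : Fin m × Fin n → ℝ := fun p => if (p.1 : ℕ) < k then 1 else 0
  have hσ : ∀ {M : Type} [AddCommMonoid M] (f : Fin m × Fin n → M),
      ∑ p, f (σ p) = ∑ p, f p := fun f => by
    simp only [Fintype.sum_prod_type_right, σ]
    exact Finset.sum_congr rfl fun j _ => Equiv.sum_comp (π j) fun i => f (i, j)
  have hχ : ∑ p, χ p = n * k := by
    have : Finset.card {i : Fin m | (i : ℕ) < k} = k := by
      rw [Fin.card_filter_val_lt, min_eq_right hkm]
    rw [Fintype.sum_prod_type_right]
    simp [χ, this]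
  have hS : ∑ i ∈ Finset.univ.filter (fun i : Fin m => (i:ℕ) < k), ∑ j, u (π j i) j =
      ∑ p, χ p • a (σ p) := by
    rw [Finset.sum_filter, Fintype.sum_prod_type]
    refine Finset.sum_congr rfl fun i _ => ?_
    by_cases h : (i : ℕ) < k <;> simp [χ, a, σ, h]
  have hvsum : ∀ l ≤ m, ∑ p, v l (σ p) = n * l := fun l hl => by
    rw [hσ, Fintype.sum_prod_type_right]
    simp [(hv l hl).1.color_sum]
  have hbound : ∀ l ≤ m, N (∑ p, χ p • a (σ p)) ≤ ∑ p, |χ p - v l (σ p)| := fun l hl => by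
    have h0 : ∑ p, v l (σ p) • a (σ p) = 0 :=
      (hσ fun p => v l p • a p).trans (hv l hl).1.vector_sum
    rw [← sub_zero (∑ p, χ p • a (σ p)), ← h0, ← Finset.sum_sub_distrib]
    simp only [← sub_smul]
    exact q.sum_smul_le _ _ _ fun p => hu_norm _ _
  have hnd : N (∑ p, χ p • a (σ p)) ≤ n * d := by
    rcases le_total d k with hdk | hdk
    · refine (hbound (k - d) (by omega)).trans (le_of_eq ?_)
      have habs : ∀ p, |χ p - v (k - d) (σ p)| = χ p - v (k - d) (σ p) := fun p => by
        refine abs_of_nonneg (sub_nonneg.mpr ?_)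
        by_cases hp : v (k - d) (σ p) = 0
        · rw [hp]
          positivity
        · have := (hπ (k - d) (by omega) p.1 p.2).2 hp
          simp only [χ]
          rw [if_pos (by omega)]
          exact (hv (k - d) (by omega)).1.le_one _
      simp only [habs]
      rw [Finset.sum_sub_distrib, hχ, hvsum _ (by omega), Nat.cast_sub hdk]
      ring
    · refine (q.sum_smul_le _ _ _ fun p => hu_norm _ _).trans ?_
      have habs : ∀ p, |χ p| = χ p := fun p => abs_of_nonneg (by positivity)
      simp only [habs, hχ]
      gcongr
  have htwo : N (∑ p, χ p • a (σ p)) ≤ 2 * d := by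
    obtain ⟨hb, hcard⟩ := hv k hkm
    have hpt : ∀ p, |χ p - v k (σ p)| ≤
        (χ p - v k (σ p)) + 2 * ((if v k (σ p) ≠ 0 then 1 else 0) - χ p) := fun p => by
      have h0 := hb.nonneg (σ p)
      have h1 := hb.le_one (σ p)
      by_cases hp : (p.1 : ℕ) < k
      · have hne : v k (σ p) ≠ 0 := (hπ k hkm p.1 p.2).1 hp
        simp only [χ, if_pos hp, if_pos hne]
        rw [abs_of_nonneg (by linarith)]
        linarith
      · simp only [χ, if_neg hp]
        rw [abs_of_nonpos (by linarith)]
        split_ifs with hne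
        · linarith
        · rw [not_not.mp hne]
          simp
    refine (hbound k hkm).trans ((Finset.sum_le_sum fun p _ => hpt p).trans ?_)
    rw [Finset.sum_add_distrib, ← Finset.mul_sum, Finset.sum_sub_distrib, Finset.sum_sub_distrib,
      hvsum k hkm, hσ fun p => if v k p ≠ 0 then (1 : ℝ) else 0, hχ, Finset.sum_boole]
    rw [Fintype.card_fin] at hcard
    have : ((Finset.card {p | v k p ≠ 0} : ℕ) : ℝ) ≤ n * k + d := by exact_mod_cast hcard
    linarith
  rw [hS]
  refine le_min hnd (htwo.trans ?_)
  have : (d : ℝ) ≤ (d : ℝ) ^ 5 := by exact_mod_cast Nat.le_self_pow (by norm_num) d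
  have : (0 : ℝ) ≤ d := by positivity
  linarith
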